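/- Let A be the norm closure of ⋃_{p≥0} A_p and C the norm closure of ⋃_{p≥1} C_p in B(H). There exists a *-isomorphism φ from C onto A that extends each of the *-isomorphisms φ_p : C_p → A_{p-1} determined by e_{ij}^l ↦ e_{ij}^{l-1} (1 ≤ l ≤ p). -/

import Mathlib

/-!
The positions `n i m` identify `ℕ` with `ℕ × ℕ`, hence `H` with `H ⊗ ℓ²(ℕ)` by
`ξ_{n i m} ↔ ξ_i ⊗ δ_m`. Concretely, the isometries `V_m : ξ_i ↦ ξ_{n i m}` present `H` as the
Hilbert sum of the ranges `V_m H` (`exists_isometries`). The amplification `ψ : T ↦ T ⊗ 1`, i.e.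
the unique operator with `ψ(T) V_m = V_m T` for all `m`, is an injective `*`-homomorphism
`B(H) → B(H)`, so it is isometric (`amplification_isometry`).

The recursion defining the matrix units gives `e_{ij}^{p+1} V_k = V_k e_{ij}^p`
(`e_succ_apply`): this is a computation on basis vectors for `p = 0`, and passes through the strong
limit for larger `p`. Therefore `ψ(e_{ij}^p) = e_{ij}^{p+1}`. As `ψ` is isometric it commutes with
norm closures, so `ψ(K_p) = K_{p+1}` (`image_Kset`). Since the compact operators are the closed
`*`-algebra generated by the `e_{ij}^0` (`compact_eq_Kset_zero`), it follows that
`ψ(A_p) = C_{p+1}` and `ψ(A) = C`. The required isomorphism is the inverse of `ψ` on its range.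
-/

open Filter

open Pointwise

/-- The closed `*`-subalgebra of `B(H)` generated by `{e_{ij}^p : i, j}`. -/
noncomputable def Kset {H : Type*} [NormedAddCommGroup H] [InnerProductSpace ℂ H]
    [CompleteSpace H] (e : ℕ → ℕ → ℕ → (H →L[ℂ] H)) (p : ℕ) : Set (H →L[ℂ] H) :=
  closure ((NonUnitalStarAlgebra.adjoin ℂ {T : H →L[ℂ] H | ∃ i j, T = e p i j} :
    NonUnitalStarSubalgebra ℂ (H →L[ℂ] H)) : Set (H →L[ℂ] H))

/-- `A_0 = K(H)` and `A_p = A_{p-1} + K_p`. -/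
noncomputable def Aset {H : Type*} [NormedAddCommGroup H] [InnerProductSpace ℂ H]
    [CompleteSpace H] (e : ℕ → ℕ → ℕ → (H →L[ℂ] H)) : ℕ → Set (H →L[ℂ] H)
  | 0 => {T : H →L[ℂ] H | IsCompactOperator ⇑T}
  | (l + 1) => Aset e l + Kset e (l + 1)

/-- `C_1 = K_1` and `C_p = C_{p-1} + K_p` (with `C_0 = {0}`). -/
noncomputable def Cset {H : Type*} [NormedAddCommGroup H] [InnerProductSpace ℂ H]
    [CompleteSpace H] (e : ℕ → ℕ → ℕ → (H →L[ℂ] H)) : ℕ → Set (H →L[ℂ] H)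
  | 0 => {0}
  | (p + 1) => Cset e p + Kset e (p + 1)

section Helpers

set_option linter.unusedSectionVars false

variable {H : Type*} [NormedAddCommGroup H] [InnerProductSpace ℂ H] [CompleteSpace H]

/-! ### Diagonal operators on a Hilbert sum -/

/-- The bounded operator `f ↦ (T (f m))_m` on `ℓ²(ℕ; H)`, that is, `T ⊗ 1`. -/
noncomputable def diagOp (T : H →L[ℂ] H) :
    lp (fun _ : ℕ => H) 2 →L[ℂ] lp (fun _ : ℕ => H) 2 :=
  LinearMap.mkContinuous
    { toFun := fun f => ⟨fun m => T (f m), by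
        refine Memℓp.mono (((lp.memℓp f).norm).const_mul ‖T‖) fun m => ?_
        exact T.le_opNorm (f m)⟩
      map_add' := fun f g => by ext m; exact map_add T (f m) (g m)
      map_smul' := fun c f => by ext m; exact map_smul T c (f m) } ‖T‖ fun f => by
        have hp : (0 : ℝ) < (2 : ENNReal).toReal := by norm_num
        refine lp.norm_le_of_forall_sum_le hp (by positivity) fun s => ?_
        have h := lp.sum_rpow_le_norm_rpow hp f s
        simp only [ENNReal.toReal_ofNat, Real.rpow_ofNat] at h ⊢
        calc ∑ i ∈ s, ‖T (f i)‖ ^ 2 ≤ ∑ i ∈ s, ‖T‖ ^ 2 * ‖f i‖ ^ 2 := by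
              refine Finset.sum_le_sum fun i _ => ?_
              rw [← mul_pow]
              gcongr
              exact T.le_opNorm (f i)
          _ = ‖T‖ ^ 2 * ∑ i ∈ s, ‖f i‖ ^ 2 := by rw [Finset.mul_sum]
          _ ≤ ‖T‖ ^ 2 * ‖f‖ ^ 2 := by gcongr
          _ = (‖T‖ * ‖f‖) ^ 2 := by ring

lemma diagOp_apply (T : H →L[ℂ] H) (f : lp (fun _ : ℕ => H) 2) (m : ℕ) :
    diagOp T f m = T (f m) := rfl

lemma diagOp_single (T : H →L[ℂ] H) (k : ℕ) (v : H) :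
    diagOp T (lp.single 2 k v) = lp.single 2 k (T v) := by
  ext m
  rw [diagOp_apply]
  by_cases h : m = k
  · subst h; simp
  · simp [h]

/-- Operators on a Hilbert sum are determined by their values on the summands. -/
lemma clm_ext_of_hilbertSum {V : ℕ → H →ₗᵢ[ℂ] H} (hV : IsHilbertSum ℂ (fun _ => H) V)
    {F : Type*} [NormedAddCommGroup F] [NormedSpace ℂ F]
    {S S' : H →L[ℂ] F} (h : ∀ k v, S (V k v) = S' (V k v)) : S = S' := by
  ext x
  obtain ⟨f, rfl⟩ := hV.linearIsometryEquiv.symm.surjective x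
  have hf := hV.hasSum_linearIsometryEquiv_symm f
  have h1 := S.hasSum hf
  have h2 := S'.hasSum hf
  simp only [h] at h1
  exact h1.unique h2

/-- Every `T` has an amplification: an operator `S` with `S V_k = V_k T` for all `k`. -/
lemma exists_amplification {V : ℕ → H →ₗᵢ[ℂ] H} (hV : IsHilbertSum ℂ (fun _ => H) V)
    (T : H →L[ℂ] H) : ∃ S : H →L[ℂ] H, ∀ k v, S (V k v) = V k (T v) := by
  refine ⟨(hV.linearIsometryEquiv.symm.toContinuousLinearEquiv : _ →L[ℂ] H) ∘L diagOp T ∘L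
    (hV.linearIsometryEquiv.toContinuousLinearEquiv : H →L[ℂ] _), fun k v => ?_⟩
  have h : hV.linearIsometryEquiv (V k v) = lp.single 2 k v := by
    rw [← hV.linearIsometryEquiv_symm_apply_single, LinearIsometryEquiv.apply_symm_apply]
  simp [h, diagOp_single]

/-- The amplification of a single operator `T`. -/
noncomputable def ampFun {V : ℕ → H →ₗᵢ[ℂ] H} (hV : IsHilbertSum ℂ (fun _ => H) V)
    (T : H →L[ℂ] H) : H →L[ℂ] H :=
  (exists_amplification hV T).choose

lemma ampFun_apply {V : ℕ → H →ₗᵢ[ℂ] H} (hV : IsHilbertSum ℂ (fun _ => H) V)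
    (T : H →L[ℂ] H) (k : ℕ) (v : H) : ampFun hV T (V k v) = V k (T v) :=
  (exists_amplification hV T).choose_spec k v

/-- The amplification `T ↦ ∑_m V_m T V_m^*` along a Hilbert sum decomposition of `H` into copies
`V_m H` of itself, as a `*`-endomorphism of `B(H)`. -/
noncomputable def amplification {V : ℕ → H →ₗᵢ[ℂ] H} (hV : IsHilbertSum ℂ (fun _ => H) V) :
    (H →L[ℂ] H) →⋆ₙₐ[ℂ] (H →L[ℂ] H) where
  toFun := ampFun hV
  map_smul' c T := by
    refine clm_ext_of_hilbertSum hV fun k v => ?_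
    simp [ampFun_apply]
  map_zero' := by
    refine clm_ext_of_hilbertSum hV fun k v => ?_
    simp [ampFun_apply]
  map_add' S T := by
    refine clm_ext_of_hilbertSum hV fun k v => ?_
    simp [ampFun_apply]
  map_mul' S T := by
    refine clm_ext_of_hilbertSum hV fun k v => ?_
    simp [ampFun_apply]
  map_star' T := by
    refine clm_ext_of_hilbertSum hV fun k v => ?_
    -- A vector of `H` is determined by its inner products with the vectors `V l u`.
    refine (InnerProductSpace.toDual ℂ H).injective (clm_ext_of_hilbertSum hV fun l u => ?_)
    rw [InnerProductSpace.toDual_apply_apply, InnerProductSpace.toDual_apply_apply,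
      ContinuousLinearMap.star_eq_adjoint, ContinuousLinearMap.star_eq_adjoint,
      ContinuousLinearMap.adjoint_inner_left, ampFun_apply,
      ampFun_apply]
    by_cases hkl : k = l
    · subst hkl
      rw [LinearIsometry.inner_map_map, LinearIsometry.inner_map_map,
        ContinuousLinearMap.adjoint_inner_left]
    · rw [hV.OrthogonalFamily hkl, hV.OrthogonalFamily hkl]

lemma amplification_apply {V : ℕ → H →ₗᵢ[ℂ] H} (hV : IsHilbertSum ℂ (fun _ => H) V)
    (T : H →L[ℂ] H) (k : ℕ) (v : H) : amplification hV T (V k v) = V k (T v) :=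
  (exists_amplification hV T).choose_spec k v

lemma amplification_eq {V : ℕ → H →ₗᵢ[ℂ] H} (hV : IsHilbertSum ℂ (fun _ => H) V)
    {S T : H →L[ℂ] H} (h : ∀ k v, S (V k v) = V k (T v)) : amplification hV T = S :=
  clm_ext_of_hilbertSum hV fun k v => by rw [amplification_apply, h]

lemma amplification_isometry {V : ℕ → H →ₗᵢ[ℂ] H} (hV : IsHilbertSum ℂ (fun _ => H) V) :
    Isometry (amplification hV) := by
  refine NonUnitalStarAlgHom.isometry _ fun S T h => ?_
  ext v
  apply (V 0).injective
  rw [← amplification_apply hV, ← amplification_apply hV, h]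

/-! ### The isometries attached to the partition -/

/-- For an injective double sequence `n` covering `ℕ`, there are isometries `V_m` with
`V_m ξ_i = ξ_{n i m}`, and `H` is the Hilbert sum of their ranges. -/
lemma exists_isometries (ξ : HilbertBasis ℕ ℂ H) (n : ℕ → ℕ → ℕ)
    (hmono : ∀ p, StrictMono (n p))
    (hdisj : ∀ p q, p ≠ q → ∀ k m, n p k ≠ n q m) (hcover : ∀ k, ∃ p m, n p m = k) :
    ∃ V : ℕ → H →ₗᵢ[ℂ] H, IsHilbertSum ℂ (fun _ => H) V ∧ ∀ m i, V m (ξ i) = ξ (n i m) := by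
  have hinj : ∀ m, Function.Injective fun i => n i m := fun m i j hij => by
    by_contra hne
    exact hdisj i j hne m m hij
  have how : ∀ m, Orthonormal ℂ fun i => ξ (n i m) := fun m =>
    ξ.orthonormal.comp (fun i => n i m) (hinj m)
  let V : ℕ → H →ₗᵢ[ℂ] H := fun m =>
    (how m).orthogonalFamily.linearIsometry.comp ξ.repr.toLinearIsometry
  have hVξ : ∀ m i, V m (ξ i) = ξ (n i m) := fun m i => by
    simp [V, ξ.repr_self]
  refine ⟨V, IsHilbertSum.mk ?_ ?_, hVξ⟩
  · intro k l hkl v w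
    have hd : Dense (Submodule.span ℂ (Set.range ξ) : Set H) :=
      Submodule.dense_iff_topologicalClosure_eq_top.2 ξ.dense_span
    have hξ : ∀ i j, inner ℂ (V k (ξ i)) (V l (ξ j)) = 0 := fun i j => by
      rw [hVξ, hVξ]
      refine ξ.orthonormal.2 fun h => ?_
      by_cases hij : i = j
      · subst hij
        exact hkl ((hmono i).injective h)
      · exact hdisj i j hij k l h
    -- Orthogonality of basis vectors extends by linearity and continuity in `w`, then in `v`.
    have h1 : ∀ i w, inner ℂ (V k (ξ i)) (V l w) = 0 := fun i w => by
      have : innerSL ℂ (V k (ξ i)) ∘L (V l).toContinuousLinearMap = 0 :=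
        ContinuousLinearMap.ext_on hd (by rintro _ ⟨j, rfl⟩; exact hξ i j)
      exact DFunLike.congr_fun this w
    have h2 : innerSL ℂ (V l w) ∘L (V k).toContinuousLinearMap = 0 :=
      ContinuousLinearMap.ext_on hd (by rintro _ ⟨i, rfl⟩; exact inner_eq_zero_symm.1 (h1 i w))
    exact inner_eq_zero_symm.1 (DFunLike.congr_fun h2 v)
  · rw [← ξ.dense_span]
    refine Submodule.topologicalClosure_mono (Submodule.span_le.2 ?_)
    rintro _ ⟨k, rfl⟩
    obtain ⟨p, m, rfl⟩ := hcover k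
    rw [← hVξ]
    exact Submodule.mem_iSup_of_mem m ⟨ξ p, rfl⟩

/-! ### Compact operators -/

lemma e_zero_eq (ξ : HilbertBasis ℕ ℂ H) {e : ℕ → ℕ → ℕ → (H →L[ℂ] H)}
    (h0 : ∀ i j k, e 0 i j (ξ k) = if k = j then ξ i else 0) (i j : ℕ) :
    e 0 i j = InnerProductSpace.rankOne ℂ (ξ i) (ξ j) := by
  refine ContinuousLinearMap.ext_on (s := Set.range ξ) ?_ ?_
  · rw [Submodule.dense_iff_topologicalClosure_eq_top]; exact ξ.dense_span
  · rintro _ ⟨k, rfl⟩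
    rw [h0, InnerProductSpace.rankOne_apply, orthonormal_iff_ite.1 ξ.orthonormal]
    by_cases h : k = j
    · simp [h]
    · simp [h, Ne.symm h]

lemma isCompactOperator_rankOne (x y : H) :
    IsCompactOperator (InnerProductSpace.rankOne ℂ x y) := by
  rw [InnerProductSpace.rankOne_def']
  have h : IsCompactOperator (ContinuousLinearMap.toSpanSingleton ℂ x) :=
    isCompactOperator_of_locallyCompactSpace_rng _
  exact h.comp_clm (innerSL ℂ y)

/-- The orthogonal projections onto the spans of finite parts of the basis are contractions. -/
lemma norm_partialSum_le (ξ : HilbertBasis ℕ ℂ H) (s : Finset ℕ) (x : H) :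
    ‖∑ i ∈ s, ξ.repr x i • ξ i‖ ≤ ‖x‖ := by
  refine (sq_le_sq₀ (norm_nonneg _) (norm_nonneg x)).1 ?_
  have h : ‖∑ i ∈ s, ξ.repr x i • ξ i‖ ^ 2 = ∑ i ∈ s, ‖inner ℂ (ξ i) x‖ ^ 2 := by
    have h := ξ.orthonormal.inner_sum (fun i => ξ.repr x i) (fun i => ξ.repr x i) s
    rw [inner_self_eq_norm_sq_to_K] at h
    simp only [RCLike.conj_mul, ξ.repr_apply_apply] at h
    simp only [ξ.repr_apply_apply]
    exact_mod_cast h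
  rw [h]
  exact ξ.orthonormal.sum_inner_products_le x

/-- For compact `T`, the operators `P_s T` approximate `T` in norm, where `P_s` is the orthogonal
projection onto the span of `ξ_i`, `i ∈ s`: the contractions `P_s` converge pointwise to `1`, hence
uniformly on the relatively compact image of the unit ball. -/
lemma compact_approx (ξ : HilbertBasis ℕ ℂ H) {T : H →L[ℂ] H} (hT : IsCompactOperator T)
    {ε : ℝ} (hε : 0 < ε) : ∃ s : Finset ℕ,
      ‖T - (∑ i ∈ s, InnerProductSpace.rankOne ℂ (ξ i) (ξ i)) ∘L T‖ ≤ 3 * ε := by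
  have hP : ∀ (s : Finset ℕ) x, (∑ i ∈ s, InnerProductSpace.rankOne ℂ (ξ i) (ξ i)) x =
      ∑ i ∈ s, ξ.repr x i • ξ i := fun s x => by
    simp [ξ.repr_apply_apply]
  obtain ⟨t, -, htf, htc⟩ := Metric.finite_approx_of_totallyBounded
    ((hT.isCompact_closure_image_closedBall (𝕜₁ := ℂ) (f := (T : H →ₗ[ℂ] H)) 1).totallyBounded) ε hε
  have hev : ∀ᶠ s : Finset ℕ in atTop, ∀ y ∈ t, dist (∑ i ∈ s, ξ.repr y i • ξ i) y < ε := by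
    rw [Filter.eventually_all_finite htf]
    exact fun y _ => Metric.tendsto_nhds.1 (ξ.hasSum_repr y) ε hε
  obtain ⟨s, hs⟩ := hev.exists
  refine ⟨s, ContinuousLinearMap.opNorm_le_of_unit_norm (by positivity) fun x hx => ?_⟩
  have hx' : T x ∈ closure ((T : H →ₗ[ℂ] H) '' Metric.closedBall 0 1) :=
    subset_closure ⟨x, by simp [hx], rfl⟩
  obtain ⟨y, hy, hxy⟩ := Set.mem_iUnion₂.1 (htc hx')
  rw [Metric.mem_ball, dist_eq_norm] at hxy
  have h1 := hs y hy
  rw [dist_eq_norm] at h1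
  have h2 := norm_partialSum_le ξ s (T x - y)
  rw [← hP] at h1 h2
  set P := ∑ i ∈ s, InnerProductSpace.rankOne ℂ (ξ i) (ξ i)
  have : (T - P ∘L T) x = (T x - y) - (P y - y) - P (T x - y) := by simp
  rw [this]
  have := norm_sub_le ((T x - y) - (P y - y)) (P (T x - y))
  have := norm_sub_le (T x - y) (P y - y)
  linarith

/-- `K(H)` is the closed `*`-algebra generated by the matrix units `e_{ij}^0`. -/
lemma compact_eq_Kset_zero (ξ : HilbertBasis ℕ ℂ H) {e : ℕ → ℕ → ℕ → (H →L[ℂ] H)}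
    (h0 : ∀ i j k, e 0 i j (ξ k) = if k = j then ξ i else 0) :
    {T : H →L[ℂ] H | IsCompactOperator ⇑T} = Kset e 0 := by
  apply Set.Subset.antisymm
  · intro T hT
    set B : NonUnitalStarSubalgebra ℂ (H →L[ℂ] H) :=
      NonUnitalStarAlgebra.adjoin ℂ {T : H →L[ℂ] H | ∃ i j, T = e 0 i j} with hB
    set M : Submodule ℂ (H →L[ℂ] H) := B.toSubmodule.topologicalClosure with hM
    have hMK : (M : Set (H →L[ℂ] H)) = Kset e 0 := rfl
    rw [← hMK]
    -- `|ξ_i⟩⟨w|` depends continuously on `w`, and `w` is a limit of combinations of the `ξ_j`.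
    have hone : ∀ i w, InnerProductSpace.rankOne ℂ (ξ i) w ∈ M := fun i w => by
      have hw : w ∈ closure (Submodule.span ℂ (Set.range ξ) : Set H) := by
        rw [← Submodule.topologicalClosure_coe, ξ.dense_span]; trivial
      have hcl : IsClosed (M : Set (H →L[ℂ] H)) := isClosed_closure
      have := map_mem_closure (t := (M : Set (H →L[ℂ] H)))
        (InnerProductSpace.rankOne ℂ (ξ i) : H →L⋆[ℂ] H →L[ℂ] H).continuous hw ?_
      · rwa [hcl.closure_eq] at this
      intro v hv
      induction hv using Submodule.span_induction with
      | mem x hx =>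
        obtain ⟨j, rfl⟩ := hx
        rw [← e_zero_eq ξ h0]
        exact subset_closure (NonUnitalStarAlgebra.subset_adjoin ℂ _ ⟨i, j, rfl⟩)
      | zero => simp
      | add x y _ _ hx hy => rw [map_add]; exact M.add_mem hx hy
      | smul c x _ hx => rw [map_smulₛₗ]; exact M.smul_mem _ hx
    have hcl : IsClosed (M : Set (H →L[ℂ] H)) := isClosed_closure
    rw [← hcl.closure_eq, Metric.mem_closure_iff]
    intro ε hε
    obtain ⟨s, hs⟩ := compact_approx ξ hT (ε := ε / 4) (by positivity)
    refine ⟨_, ?_, (dist_eq_norm _ _).trans_lt (hs.trans_lt (by linarith))⟩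
    rw [ContinuousLinearMap.finsetSum_comp]
    refine M.sum_mem fun i _ => ?_
    rw [InnerProductSpace.rankOne_comp]
    exact hone i _
  · refine closure_minimal (fun T hT => ?_) isClosed_setOfPred_isCompactOperator
    -- Carrying the adjoint along makes the induction step for `star` immediate.
    suffices h : IsCompactOperator T ∧ IsCompactOperator ⇑(star T) from h.1
    induction hT using NonUnitalStarAlgebra.adjoin_induction with
    | mem x hx =>
      obtain ⟨i, j, rfl⟩ := hx
      rw [e_zero_eq ξ h0, ContinuousLinearMap.star_eq_adjoint, InnerProductSpace.adjoint_rankOne]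
      exact ⟨isCompactOperator_rankOne _ _, isCompactOperator_rankOne _ _⟩
    | add x y _ _ hx hy => rw [star_add]; exact ⟨hx.1.add hy.1, hx.2.add hy.2⟩
    | zero => rw [star_zero]; exact ⟨isCompactOperator_zero, isCompactOperator_zero⟩
    | mul x y _ _ hx hy => rw [star_mul]; exact ⟨hx.1.comp_clm y, hy.2.comp_clm (star x)⟩
    | smul r x _ hx => rw [star_smul]; exact ⟨hx.1.smul r, hx.2.smul (star r)⟩
    | star x _ hx => rw [star_star]; exact ⟨hx.2, hx.1⟩

/-! ### The amplification shifts the levels -/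

/-- The intertwining relation `e_{ij}^{p+1} V_k = V_k e_{ij}^p`. -/
lemma e_succ_apply (ξ : HilbertBasis ℕ ℂ H) {n : ℕ → ℕ → ℕ} (hmono : ∀ p, StrictMono (n p))
    (hdisj : ∀ p q, p ≠ q → ∀ k m, n p k ≠ n q m) {e : ℕ → ℕ → ℕ → (H →L[ℂ] H)}
    (h0 : ∀ i j k, e 0 i j (ξ k) = if k = j then ξ i else 0)
    (hrec : ∀ p i j, ∀ v : H, Filter.Tendsto
      (fun M => ∑ m ∈ Finset.range M, e p (n i m) (n j m) v)
      Filter.atTop (nhds (e (p + 1) i j v)))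
    {V : ℕ → H →ₗᵢ[ℂ] H} (hVξ : ∀ m i, V m (ξ i) = ξ (n i m)) (p : ℕ) :
    ∀ i j k v, e (p + 1) i j (V k v) = V k (e p i j v) := by
  induction p with
  | zero =>
    intro i j k v
    suffices h : (e 1 i j) ∘L (V k).toContinuousLinearMap =
        (V k).toContinuousLinearMap ∘L (e 0 i j) from DFunLike.congr_fun h v
    refine ContinuousLinearMap.ext_on (s := Set.range ξ) ?_ ?_
    · rw [Submodule.dense_iff_topologicalClosure_eq_top]; exact ξ.dense_span
    rintro _ ⟨a, rfl⟩
    simp only [ContinuousLinearMap.comp_apply, LinearIsometry.coe_toContinuousLinearMap, hVξ, h0]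
    refine tendsto_nhds_unique (hrec 0 i j _) (tendsto_atTop_of_eventually_const (i₀ := k + 1) ?_)
    intro M hM
    simp only [h0]
    by_cases haj : a = j
    · subst haj
      simp only [(hmono a).injective.eq_iff, if_true, hVξ]
      simp [Finset.sum_ite_eq, Nat.lt_of_succ_le hM]
    · simp [haj, hdisj a j haj]
  | succ p ih =>
    intro i j k v
    refine tendsto_nhds_unique (hrec (p + 1) i j _) ?_
    simp only [ih, ← map_sum]
    exact ((V k).continuous.tendsto _).comp (hrec p i j v)

/-- An isometric `*`-homomorphism shifting the matrix units carries `K_p` onto `K_{p+1}`. -/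
lemma image_Kset {ψ : (H →L[ℂ] H) →⋆ₙₐ[ℂ] (H →L[ℂ] H)} (hψ : Isometry ψ)
    {e : ℕ → ℕ → ℕ → (H →L[ℂ] H)} (he : ∀ p i j, ψ (e p i j) = e (p + 1) i j) (p : ℕ) :
    ψ '' Kset e p = Kset e (p + 1) := by
  unfold Kset
  rw [← hψ.isClosedEmbedding.closure_image_eq, ← NonUnitalStarSubalgebra.coe_map,
    NonUnitalStarAlgHom.map_adjoin]
  congr 3
  ext T
  constructor
  · rintro ⟨_, ⟨i, j, rfl⟩, rfl⟩
    exact ⟨i, j, he p i j⟩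
  · rintro ⟨i, j, rfl⟩
    exact ⟨_, ⟨i, j, rfl⟩, he p i j⟩

lemma image_Aset {ψ : (H →L[ℂ] H) →⋆ₙₐ[ℂ] (H →L[ℂ] H)} (hψ : Isometry ψ)
    {e : ℕ → ℕ → ℕ → (H →L[ℂ] H)} (he : ∀ p i j, ψ (e p i j) = e (p + 1) i j)
    (hK : {T : H →L[ℂ] H | IsCompactOperator ⇑T} = Kset e 0) (p : ℕ) :
    ψ '' Aset e p = Cset e (p + 1) := by
  induction p with
  | zero => simp only [Aset, Cset, hK, image_Kset hψ he, Set.singleton_add, zero_add, Set.image_id']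
  | succ p ih =>
    rw [Aset, Set.image_add, ih, image_Kset hψ he]
    rfl

lemma image_closure_Aset {ψ : (H →L[ℂ] H) →⋆ₙₐ[ℂ] (H →L[ℂ] H)} (hψ : Isometry ψ)
    {e : ℕ → ℕ → ℕ → (H →L[ℂ] H)} (hAC : ∀ p, ψ '' Aset e p = Cset e (p + 1)) :
    ψ '' closure (⋃ p, Aset e p) = closure (⋃ p, Cset e p) := by
  rw [← hψ.isClosedEmbedding.closure_image_eq, Set.image_iUnion]
  simp only [hAC]
  congr 1
  refine Set.Subset.antisymm (Set.iUnion_subset fun p => Set.subset_iUnion _ (p + 1))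
    (Set.iUnion_subset fun p => ?_)
  cases p with
  | succ p => exact Set.subset_iUnion (fun p => Cset e (p + 1)) p
  | zero =>
    rintro _ rfl
    rw [Set.mem_iUnion]
    refine ⟨0, ?_⟩
    rw [← hAC]
    exact ⟨0, isCompactOperator_zero, map_zero ψ⟩

end Helpers

/-- with `A` the norm closure of `⋃ A_p` and `C` the norm closure of
`⋃_{p≥1} C_p`, there is a `*`-isomorphism `φ : C → A` extending each `φ_p`, i.e. sending
`e_{ij}^l ↦ e_{ij}^{l-1}` for every `l ≥ 1` and carrying each `C_p` onto `A_{p-1}`. -/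
theorem iso_C_onto_A
    {H : Type*} [NormedAddCommGroup H] [InnerProductSpace ℂ H] [CompleteSpace H]
    (ξ : HilbertBasis ℕ ℂ H)
    (n : ℕ → ℕ → ℕ) (hmono : ∀ p, StrictMono (n p))
    (hdisj : ∀ p q, p ≠ q → ∀ k m, n p k ≠ n q m)
    (hcover : ∀ k, ∃ p m, n p m = k)
    (e : ℕ → ℕ → ℕ → (H →L[ℂ] H))
    (h0 : ∀ i j k, e 0 i j (ξ k) = if k = j then ξ i else 0)
    (hrec : ∀ p i j, ∀ v : H, Filter.Tendsto
      (fun M => ∑ m ∈ Finset.range M, e p (n i m) (n j m) v)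
      Filter.atTop (nhds (e (p + 1) i j v)))
    :
    ∃ φ : (H →L[ℂ] H) → (H →L[ℂ] H),
      (∀ x ∈ closure (⋃ p, Cset e p), ∀ y ∈ closure (⋃ p, Cset e p),
        φ (x + y) = φ x + φ y ∧ φ (x * y) = φ x * φ y) ∧
      (∀ c : ℂ, ∀ x ∈ closure (⋃ p, Cset e p), φ (c • x) = c • φ x) ∧
      (∀ x ∈ closure (⋃ p, Cset e p), φ (star x) = star (φ x)) ∧
      Set.InjOn φ (closure (⋃ p, Cset e p)) ∧
      φ '' (closure (⋃ p, Cset e p)) = closure (⋃ p, Aset e p) ∧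
      (∀ p : ℕ, 1 ≤ p → φ '' (Cset e p) = Aset e (p - 1)) ∧
      (∀ l : ℕ, 1 ≤ l → ∀ i j : ℕ, φ (e l i j) = e (l - 1) i j) := by
  obtain ⟨V, hV, hVξ⟩ := exists_isometries ξ n hmono hdisj hcover
  have hψ := amplification_isometry hV
  have he : ∀ p i j, amplification hV (e p i j) = e (p + 1) i j := fun p i j =>
    amplification_eq hV (e_succ_apply ξ hmono hdisj h0 hrec hVξ p i j)
  set ψ := amplification hV
  have hAC := image_Aset hψ he (compact_eq_Kset_zero ξ h0)
  have hinv : ∀ a, Function.invFun ψ (ψ a) = a := Function.leftInverse_invFun hψ.injective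
  have himg : ∀ s : Set (H →L[ℂ] H), Function.invFun ψ '' (ψ '' s) = s := fun s => by
    simp [Set.image_image, hinv]
  rw [← image_closure_Aset hψ hAC]
  refine ⟨Function.invFun ψ, ?_, ?_, ?_, ?_, himg _, ?_, ?_⟩
  · rintro _ ⟨a, -, rfl⟩ _ ⟨b, -, rfl⟩
    simp only [← map_add, ← map_mul, hinv, and_self]
  · rintro c _ ⟨a, -, rfl⟩
    simp only [← map_smul, hinv]
  · rintro _ ⟨a, -, rfl⟩
    simp only [← map_star, hinv]
  · rintro _ ⟨a, -, rfl⟩ _ ⟨b, -, rfl⟩ h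
    rw [hinv, hinv] at h
    rw [h]
  · intro p hp
    obtain ⟨p, rfl⟩ := Nat.exists_eq_add_of_le' hp
    rw [← hAC, himg, Nat.add_sub_cancel]
  · intro l hl i j
    obtain ⟨l, rfl⟩ := Nat.exists_eq_add_of_le' hl
    rw [← he, hinv, Nat.add_sub_cancel]
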